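/- For all real numbers x ≥ 1 and y ≥ 2, one has f(x,y) ≥ A(x/2, y). -/

import Mathlib

/-- `Pmax n` is the largest prime factor of `n`, with the convention `Pmax 1 = 1`. -/
def Pmax (n : ℕ) : ℕ := if n ≤ 1 then 1 else n.primeFactors.sup id

/-- The Schinzel–Szekeres function: if `n = p₁ p₂ ⋯ p_Ω` with `p₁ ≥ p₂ ≥ ⋯ ≥ p_Ω` prime,
`SS n = max_{1 ≤ k ≤ Ω} p₁ ⋯ p_{k-1} p_k²`, and `SS 1 = 1`.
(`Nat.primeFactorsList n` is the *increasing* list of prime factors with multiplicity;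
the value produced for the index `j` is the one for `k = Ω - j`.) -/
def SS (n : ℕ) : ℕ :=
  ((List.range n.primeFactorsList.length).map
    (fun j => (n.primeFactorsList.drop j).headI * (n.primeFactorsList.drop j).prod)).foldr max 1

/-- A chain in the divisor graph: a finite sequence of pairwise distinct positive
integers in which any two consecutive terms are adjacent in the divisor graph
(the smaller divides the larger). -/
def IsDivChain (l : List ℕ) : Prop :=
  l.Nodup ∧ (∀ n ∈ l, 0 < n) ∧ l.Chain' (fun a b => a ∣ b ∨ b ∣ a)

/-- `fxy x y` is the maximum length of a chain all of whose terms `n`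
satisfy `n ≤ x` and `P(n) ≤ y`. -/
noncomputable def fxy (x y : ℝ) : ℕ :=
  sSup {L : ℕ | ∃ l : List ℕ, IsDivChain l ∧
    (∀ n ∈ l, (n : ℝ) ≤ x ∧ (Pmax n : ℝ) ≤ y) ∧ l.length = L}

/-- `Axy x y = #{n ≥ 1 : P(n) ≤ y and S(n) ≤ x}`. -/
noncomputable def Axy (x y : ℝ) : ℕ :=
  {n : ℕ | 1 ≤ n ∧ (Pmax n : ℝ) ≤ y ∧ (SS n : ℝ) ≤ x}.ncard

/-- adjacency -/
def DAdj (a b : ℕ) : Prop := a ∣ b ∨ b ∣ a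

/-- existence of a path from `a` to `b` inside `V` and covering `C`. -/
def Pth (a b : ℕ) (V C : Set ℕ) : Prop :=
  ∃ l : List ℕ, l.Nodup ∧ l.IsChain DAdj ∧ l.head? = some a ∧ l.getLast? = some b ∧
    (∀ n ∈ l, n ∈ V) ∧ ∀ n ∈ C, n ∈ l

theorem DAdj.symm {a b : ℕ} (h : DAdj a b) : DAdj b a := Or.symm h

theorem Pth.mono {a b : ℕ} {V V' C C' : Set ℕ} (h : Pth a b V C) (hV : V ⊆ V') (hC : C' ⊆ C) :
    Pth a b V' C' := by
  obtain ⟨l, h1, h2, h3, h4, h5, h6⟩ := h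
  exact ⟨l, h1, h2, h3, h4, fun n hn => hV (h5 n hn), fun n hn => h6 n (hC hn)⟩

theorem Pth.single (a : ℕ) : Pth a a {a} {a} :=
  ⟨[a], by simp, by simp, by simp, by simp, by simp, by simp⟩

theorem Pth.reverse {a b : ℕ} {V C : Set ℕ} (h : Pth a b V C) : Pth b a V C := by
  obtain ⟨l, h1, h2, h3, h4, h5, h6⟩ := h
  refine ⟨l.reverse, by simpa using h1, ?_, by simpa using h4, by simpa using h3,
    by simpa using h5, by simpa using h6⟩
  rw [List.isChain_reverse]
  exact h2.imp (fun _ _ h => Or.symm h)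

theorem Pth.append {a b c d : ℕ} {V1 V2 C1 C2 : Set ℕ} (h : Pth a b V1 C1) (h' : Pth c d V2 C2)
    (hbc : DAdj b c) (hd : ∀ n ∈ V1, n ∉ V2) : Pth a d (V1 ∪ V2) (C1 ∪ C2) := by
  obtain ⟨l, h1, h2, h3, h4, h5, h6⟩ := h
  obtain ⟨l', h1', h2', h3', h4', h5', h6'⟩ := h'
  refine ⟨l ++ l', ?_, ?_, ?_, ?_, ?_, ?_⟩
  · rw [List.nodup_append]
    refine ⟨h1, h1', ?_⟩
    intro x hx y hy hxy
    subst hxy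
    exact hd x (h5 x hx) (h5' x hy)
  · rw [List.isChain_append]
    refine ⟨h2, h2', ?_⟩
    intro x hx y hy
    rw [h4] at hx
    rw [h3'] at hy
    simp at hx hy
    subst hx hy
    exact hbc
  · simp [h3]
  · simp [h4']
  · intro n hn
    rcases List.mem_append.1 hn with hn | hn
    · exact Or.inl (h5 n hn)
    · exact Or.inr (h5' n hn)
  · rintro n (hn | hn)
    · exact List.mem_append.2 (Or.inl (h6 n hn))
    · exact List.mem_append.2 (Or.inr (h6' n hn))

theorem Pth.mul {a b : ℕ} {V C : Set ℕ} (q : ℕ) (hq : 0 < q) (h : Pth a b V C) :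
    Pth (q * a) (q * b) (Set.image (fun n => q * n) V) (Set.image (fun n => q * n) C) := by
  obtain ⟨l, h1, h2, h3, h4, h5, h6⟩ := h
  refine ⟨l.map (fun n => q * n), ?_, ?_, by simp [h3], by simp [h4], ?_, ?_⟩
  · exact h1.map (fun a b hab => Nat.eq_of_mul_eq_mul_left hq hab)
  · rw [List.isChain_map]
    exact h2.imp (fun _ _ h => h.imp (fun h => Nat.mul_dvd_mul_left q h)
      (fun h => Nat.mul_dvd_mul_left q h))
  · intro n hn
    obtain ⟨m, hm, rfl⟩ := List.mem_map.1 hn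
    exact ⟨m, h5 m hm, rfl⟩
  · rintro _ ⟨m, hm, rfl⟩
    exact List.mem_map.2 ⟨m, h6 m hm, rfl⟩

theorem Pth.clique (F : Finset ℕ) (a b : ℕ) (hab : a ≠ b) (ha : a ∈ F) (hb : b ∈ F)
    (hF : ∀ x ∈ F, ∀ y ∈ F, DAdj x y) : Pth a b F F := by
  have hmem : ∀ n, n ∈ (a :: (((F.erase a).erase b).toList ++ [b])) ↔ n ∈ F := by
    intro n
    simp
    constructor
    · rintro (rfl | ⟨_, _, h⟩ | rfl) <;> assumption
    · intro h
      tauto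
  refine ⟨a :: (((F.erase a).erase b).toList ++ [b]), ?_, ?_, by simp, ?_, ?_, ?_⟩
  · rw [List.nodup_cons, List.nodup_append]
    refine ⟨by simp [hab], Finset.nodup_toList _, by simp, ?_⟩
    intro x hx y hy
    simp at hx hy
    rw [hy]
    exact hx.1
  · apply List.Pairwise.isChain
    apply List.Pairwise.imp_of_mem (R := fun _ _ => True)
    · intro x y hx hy _
      exact hF x ((hmem x).1 hx) y ((hmem y).1 hy)
    · exact List.pairwise_of_forall (fun _ _ => trivial)
  · rw [← List.cons_append, List.getLast?_append]; simp
  · intro n hn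
    exact (hmem n).1 hn
  · intro n hn
    exact (hmem n).2 hn

/-- Recursive description of `P(n) ≤ p`, `S(n) ≤ z`. -/
inductive Good : ℕ → ℕ → ℕ → Prop
  | one (z p : ℕ) : Good z p 1
  | mul (z p q m : ℕ) (hq : q.Prime) (hqp : q ≤ p) (hz : q * q ≤ z) (hm : Good (z / q) q m) :
      Good z p (q * m)

/-- ambient smooth numbers -/
def Sm (z p : ℕ) : Set ℕ := {n | 0 < n ∧ n ≤ 2 * z ∧ ∀ r : ℕ, r.Prime → r ∣ n → r ≤ p}
/-- good numbers -/
def Gd (z p : ℕ) : Set ℕ := {n | Good z p n}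

theorem Sm_mono {z p p' : ℕ} (h : p ≤ p') : Sm z p ⊆ Sm z p' :=
  fun _ hn => ⟨hn.1, hn.2.1, fun r hr hd => (hn.2.2 r hr hd).trans h⟩

theorem one_mem_Sm {z p : ℕ} (h : 1 ≤ z) : 1 ∈ Sm z p := by
  refine ⟨by norm_num, by omega, ?_⟩
  intro r hr hd
  exact absurd (Nat.dvd_one.1 hd) hr.one_lt.ne'

theorem block_sub {z q : ℕ} (hq : q.Prime) :
    Set.image (fun n => q * n) (Sm (z / q) q) ⊆ Sm z q \ {1} := by
  rintro _ ⟨m, ⟨h0, h1, h2⟩, rfl⟩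
  refine ⟨⟨Nat.mul_pos hq.pos h0, ?_, ?_⟩, ?_⟩
  · have := Nat.div_mul_le_self z q
    show q * m ≤ 2 * z
    nlinarith
  · intro r hr hd
    rcases (Nat.Prime.dvd_mul hr).1 hd with h | h
    · exact Nat.le_of_dvd hq.pos h
    · exact h2 r hr h
  · intro h
    exact hq.one_lt.ne' (Nat.eq_one_of_mul_eq_one_right h)

theorem not_Sm_of_dvd {z p q n : ℕ} (hq : q.Prime) (hpq : p < q) (hd : q ∣ n) : n ∉ Sm z p :=
  fun h => absurd (h.2.2 q hq hd) (by omega)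

/-- consecutive primes -/
def Cons (p q : ℕ) : Prop := p.Prime ∧ q.Prime ∧ p < q ∧ ∀ r : ℕ, r.Prime → r < q → r ≤ p

theorem exists_cons {q : ℕ} (hq : q.Prime) (h3 : 3 ≤ q) : ∃ p, Cons p q := by
  classical
  have hne : ((Finset.range q).filter Nat.Prime).Nonempty :=
    ⟨2, by simp [Nat.prime_two]; omega⟩
  have hm := Finset.max'_mem _ hne
  rw [Finset.mem_filter, Finset.mem_range] at hm
  refine ⟨_, hm.2, hq, hm.1, ?_⟩
  intro r hr hrq
  exact Finset.le_max' _ _ (by simp [hr, hrq])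

theorem Gd_drop {z p q : ℕ} (h : ∀ r : ℕ, r.Prime → r ≤ q → r * r ≤ z → r ≤ p) :
    Gd z q ⊆ Gd z p := by
  intro n hn
  cases hn with
  | one => exact Good.one _ _
  | mul _ _ r m hr hrp hz hm => exact Good.mul _ _ r m hr (h r hr hrp hz) hz hm

theorem Gd_split {z p q : ℕ} (h : Cons p q) :
    Gd z q ⊆ Set.image (fun n => q * n) (Gd (z / q) q) ∪ (Gd z p \ {1}) ∪ {1} := by
  intro n hn
  cases hn with
  | one => exact Or.inr rfl
  | mul _ _ r m hr hrp hz hm =>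
    left
    by_cases hrq : r = q
    · subst hrq
      exact Or.inl ⟨m, hm, rfl⟩
    · right
      refine ⟨Good.mul _ _ r m hr (h.2.2.2 r hr (by omega)) hz hm, ?_⟩
      intro h
      exact hr.one_lt.ne' (Nat.eq_one_of_mul_eq_one_right h)

/-- powers of two -/
noncomputable def P2 (z : ℕ) : Finset ℕ := by
  classical exact (Finset.Icc 2 (2 * z)).filter (fun n => ∃ i, n = 2 ^ i)

theorem mem_P2 {z n : ℕ} : n ∈ P2 z ↔ 2 ≤ n ∧ n ≤ 2 * z ∧ ∃ i, n = 2 ^ i := by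
  classical simp [P2, and_assoc]

theorem P2_path {z a b : ℕ} (hz : 2 ≤ z) (ha : a = 2 ∨ a = 4) (hb : b = 2 ∨ b = 4) (hab : a ≠ b) :
    Pth a b (P2 z) (P2 z) := by
  have h2 : 2 ∈ P2 z := mem_P2.2 ⟨by omega, by omega, 1, rfl⟩
  have h4 : 4 ∈ P2 z := mem_P2.2 ⟨by omega, by omega, 2, rfl⟩
  apply Pth.clique _ _ _ hab
  · rcases ha with rfl | rfl <;> assumption
  · rcases hb with rfl | rfl <;> assumption
  · intro x hx y hy
    obtain ⟨-, -, i, rfl⟩ := mem_P2.1 hx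
    obtain ⟨-, -, j, rfl⟩ := mem_P2.1 hy
    rcases le_total i j with h | h
    · exact Or.inl (Nat.pow_dvd_pow 2 h)
    · exact Or.inr (Nat.pow_dvd_pow 2 h)

theorem P2_sub {z p : ℕ} (hp : 2 ≤ p) : (P2 z : Set ℕ) ⊆ Sm z p \ {1} := by
  intro n hn
  obtain ⟨h2, hz, i, rfl⟩ := mem_P2.1 hn
  refine ⟨⟨by omega, hz, ?_⟩, ?_⟩
  · intro r hr hd
    have := (Nat.prime_dvd_prime_iff_eq hr Nat.prime_two).1 (hr.dvd_of_dvd_pow hd)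
    omega
  · intro h
    have : 2 ^ i = 1 := h
    omega

theorem Good_le {z p n : ℕ} (h : Good z p n) : n ≤ z ∨ n = 1 := by
  induction h with
  | one => right; rfl
  | mul z p q m hq hqp hz hm ih =>
    left
    rcases ih with ih | rfl
    · calc q * m ≤ q * (z / q) := Nat.mul_le_mul_left _ ih
        _ ≤ z := Nat.mul_div_le z q
    · have := hq.pos
      nlinarith

theorem Good_two {z p n : ℕ} (h : Good z p n) : p ≤ 2 → ∃ i, n = 2 ^ i := by
  induction h with
  | one => intro _; exact ⟨0, rfl⟩
  | mul z p q m hq hqp hz hm ih =>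
    intro hp
    have h2 := hq.two_le
    have : q = 2 := by omega
    subst this
    obtain ⟨i, rfl⟩ := ih le_rfl
    exact ⟨i + 1, by ring⟩

theorem Gd_two {z : ℕ} : Gd z 2 \ {1} ⊆ (P2 z : Set ℕ) := by
  rintro n ⟨hn, h1⟩
  have h1 : n ≠ 1 := h1
  obtain ⟨i, hi⟩ := Good_two hn le_rfl
  have hle := Good_le hn
  have : 0 < n := by rw [hi]; positivity
  exact mem_P2.2 ⟨by omega, by omega, i, hi⟩

theorem cons23 : Cons 2 3 := by
  refine ⟨Nat.prime_two, Nat.prime_three, by norm_num, ?_⟩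
  intro r _ h
  omega

theorem desc_three {z a b : ℕ} (hz : 9 ≤ z) (ha : a = 2 ∨ a = 4) (hb : b = 2 ∨ b = 4) (hab : a ≠ b)
    (h : Pth 1 a (Sm (z / 3) 3) (Gd (z / 3) 3)) :
    Pth 3 b (Sm z 3 \ {1}) (Gd z 3 \ {1}) := by
  have h1 := h.mul 3 (by norm_num)
  have h2 := h1.append (P2_path (z := z) (by omega) ha hb hab) (Or.inr (Dvd.intro_left 3 rfl)) ?_
  · refine h2.mono (Set.union_subset (block_sub Nat.prime_three) (P2_sub (by norm_num))) ?_
    rintro n ⟨hn, hn1⟩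
    rcases Gd_split cons23 hn with (h | h) | h
    · exact Or.inl h
    · exact Or.inr (Gd_two h)
    · exact absurd h hn1
  · rintro _ ⟨m, hm, rfl⟩ hn
    exact not_Sm_of_dvd (q := 3) (p := 2) Nat.prime_three (by norm_num) (Dvd.intro m rfl)
      (P2_sub (le_refl 2) hn).1

theorem add_one {z p a b : ℕ} (hz : 1 ≤ z) (h : Pth a b (Sm z p \ {1}) (Gd z p \ {1})) :
    Pth 1 b (Sm z p) (Gd z p) := by
  refine ((Pth.single 1).append h (Or.inl (one_dvd _)) ?_).mono ?_ ?_
  · rintro n hn ⟨_, h⟩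
    exact h hn
  · rintro n (hn | hn)
    · have hn : n = 1 := hn
      rw [hn]; exact one_mem_Sm hz
    · exact hn.1
  · intro n hn
    by_cases h1 : n = 1
    · exact Or.inl h1
    · exact Or.inr ⟨hn, h1⟩

theorem T_two {z p a b : ℕ} (hp : 2 ≤ p) (hz : 2 ≤ z) (ha : a = 2 ∨ a = 4) (hb : b = 2 ∨ b = 4)
    (hab : a ≠ b) (h : Gd z p ⊆ Gd z 2) : Pth 1 b (Sm z p) (Gd z p) := by
  apply add_one (by omega) (a := a)
  refine (P2_path hz ha hb hab).mono (P2_sub hp) ?_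
  exact fun n hn => Gd_two ⟨h hn.1, hn.2⟩

theorem X_all (z : ℕ) : 2 ≤ z → ∀ a b, (a = 2 ∨ a = 4) → (b = 2 ∨ b = 4) → a ≠ b →
    Pth 1 b (Sm z 3) (Gd z 3) := by
  induction z using Nat.strong_induction_on with
  | _ z ih =>
    intro hz a b ha hb hab
    by_cases h9 : 9 ≤ z
    · exact add_one (by omega) (desc_three h9 ha hb hab
        (ih (z / 3) (by omega) (by omega) b a hb ha hab.symm))
    · apply T_two (by norm_num) hz ha hb hab
      apply Gd_drop
      intro r hr h3 hrz
      by_contra h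
      have : r = 3 := by omega
      subst this
      omega

/-- The main hypothesis. -/
def HI (z : ℕ) : Prop := ∀ p q, Cons p q → q ≤ z → Pth p 1 (Sm z q) (Gd z q)

theorem desc (z : ℕ) (H : ∀ w < z, HI w) (q : ℕ) : q.Prime → 3 ≤ q → q * q ≤ z →
    Pth q 2 (Sm z q \ {1}) (Gd z q \ {1}) := by
  induction q using Nat.strong_induction_on with
  | _ q ih =>
    intro hq h3 hz
    obtain ⟨p, hc⟩ := exists_cons hq h3
    by_cases hq3 : q = 3
    · subst hq3
      exact desc_three hz (Or.inr rfl) (Or.inl rfl) (by norm_num)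
        (X_all _ (by omega) 2 4 (Or.inl rfl) (Or.inr rfl) (by norm_num))
    · have hp3 : 3 ≤ p := hc.2.2.2 3 Nat.prime_three (by omega)
      have hpq := hc.2.2.1
      have hzq : q ≤ z / q := (Nat.le_div_iff_mul_le hq.pos).2 hz
      have h1 := ((H (z / q) (Nat.div_lt_self (by nlinarith) hq.one_lt) p q hc hzq).reverse).mul
        q hq.pos
      have h2 := ih p hpq hc.1 hp3 (by nlinarith)
      rw [mul_one] at h1
      refine (h1.append h2 (Or.inr (Dvd.intro_left q rfl)) ?_).mono ?_ ?_
      · rintro _ ⟨m, hm, rfl⟩ hn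
        exact not_Sm_of_dvd hq hpq (Dvd.intro m rfl) hn.1
      · exact Set.union_subset (block_sub hq) (Set.sdiff_subset_sdiff_left (Sm_mono hpq.le))
      · rintro n ⟨hn, hn1⟩
        rcases Gd_split hc hn with h | h
        · exact h
        · exact absurd h hn1

theorem T_all (z : ℕ) (H : ∀ w < z, HI w) (hz : 2 ≤ z) (p : ℕ) (hp : 2 ≤ p) :
    Pth 1 2 (Sm z p) (Gd z p) := by
  induction p, hp using Nat.le_induction with
  | base => exact T_two le_rfl hz (Or.inr rfl) (Or.inl rfl) (by norm_num) subset_rfl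
  | succ p hp ih =>
    by_cases h : (p + 1).Prime ∧ (p + 1) * (p + 1) ≤ z
    · exact add_one (by omega) (desc z H (p + 1) h.1 (by omega) h.2)
    · refine ih.mono (Sm_mono (by omega)) (Gd_drop ?_)
      intro r hr hrp hrz
      by_contra hlt
      have : r = p + 1 := by omega
      subst this
      exact h ⟨hr, hrz⟩

theorem HI_all (z : ℕ) : HI z := by
  induction z using Nat.strong_induction_on with
  | _ z H =>
    intro p q hc hqz
    have hp := hc.1
    have hq := hc.2.1
    have hpq := hc.2.2.1
    by_cases hp3 : 3 ≤ p
    · by_cases h1 : p * p ≤ z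
      · have hD := desc z H p hp hp3 h1
        by_cases h2 : q * q ≤ z
        · have hzq : q ≤ z / q := (Nat.le_div_iff_mul_le hq.pos).2 h2
          have hlt : z / q < z := Nat.div_lt_self (by nlinarith) hq.one_lt
          have hT := ((T_all (z / q) (fun w hw => H w (hw.trans hlt)) (by omega) q
            hq.two_le).reverse).mul q hq.pos
          have h3 := hD.append hT (Or.inl (Dvd.intro_left q rfl)) ?_
          · refine (h3.append (Pth.single 1) (Or.inr (one_dvd _)) ?_).mono ?_ ?_
            · rintro n (hn | hn)
              · exact hn.2
              · exact (block_sub hq hn).2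
            · rintro n ((hn | hn) | hn)
              · exact Sm_mono hpq.le hn.1
              · exact (block_sub hq hn).1
              · have hn : n = 1 := hn
                rw [hn]; exact one_mem_Sm (by omega)
            · intro n hn
              rcases Gd_split hc hn with (h | h) | h
              · exact Or.inl (Or.inr h)
              · exact Or.inl (Or.inl h)
              · exact Or.inr h
          · rintro n hn ⟨m, hm, rfl⟩
            exact not_Sm_of_dvd hq hpq (Dvd.intro m rfl) hn.1
        · refine (hD.append (Pth.single 1) (Or.inr (one_dvd _)) (fun n hn => hn.2)).mono ?_ ?_
          · rintro n (hn | hn)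
            · exact Sm_mono hpq.le hn.1
            · have hn : n = 1 := hn
              rw [hn]; exact one_mem_Sm (by omega)
          · intro n hn
            by_cases hn1 : n = 1
            · exact Or.inr hn1
            · refine Or.inl ⟨Gd_drop ?_ hn, hn1⟩
              intro r hr hrq hrz
              refine hc.2.2.2 r hr ?_
              rcases hrq.lt_or_eq with h | h
              · exact h
              · subst h; exact absurd hrz h2
      · have hT := T_all z H (by omega) (p - 1) (by omega)
        have hE : Pth (2 * p) p ({2 * p} ∪ {p}) ({2 * p} ∪ {p}) := by
          refine (Pth.single (2 * p)).append (Pth.single p) (Or.inr (Dvd.intro_left 2 rfl)) ?_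
          intro n hn hn'
          have h1 : n = 2 * p := hn
          have h2 : n = p := hn'
          omega
        refine ((hT.append hE (Or.inl (Dvd.intro p rfl)) ?_).reverse).mono ?_ ?_
        · intro n hn hn'
          refine not_Sm_of_dvd (q := p) hp (by omega) ?_ hn
          rcases hn' with h | h
          · rw [show n = 2 * p from h]; exact Dvd.intro_left 2 rfl
          · rw [show n = p from h]
        · rintro n (hn | hn | hn)
          · exact Sm_mono (by omega) hn
          · rw [show n = 2 * p from hn]
            refine ⟨by omega, by omega, ?_⟩
            intro r hr hd
            rcases (Nat.Prime.dvd_mul hr).1 hd with h | h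
            · have := Nat.le_of_dvd (by norm_num) h
              omega
            · have := Nat.le_of_dvd (by omega) h
              omega
          · rw [show n = p from hn]
            refine ⟨by omega, by omega, ?_⟩
            intro r hr h
            have := Nat.le_of_dvd (by omega) h
            omega
        · intro n hn
          refine Or.inl (Gd_drop ?_ hn)
          intro r hr hrq hrz
          by_contra hlt
          have : p ≤ r := by omega
          nlinarith
    · have h2 := hp.two_le
      have hp2 : p = 2 := by omega
      subst hp2
      have hq3 : q = 3 := by
        by_contra h
        have := hc.2.2.2 3 Nat.prime_three (by omega)
        omega
      subst hq3
      exact (X_all z (by omega) 4 2 (Or.inr rfl) (Or.inl rfl) (by norm_num)).reverse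

theorem foldr_max_le (l : List ℕ) (a : ℕ) (h : a ∈ l) : a ≤ l.foldr max 1 := by
  induction l with
  | nil => simp at h
  | cons b l ih =>
    simp at h ⊢
    rcases h with rfl | h
    · exact Or.inl le_rfl
    · exact Or.inr (ih h)

theorem foldr_max_mem (l : List ℕ) : l.foldr max 1 = 1 ∨ l.foldr max 1 ∈ l := by
  induction l with
  | nil => simp
  | cons b l ih =>
    simp only [List.foldr_cons]
    rcases max_choice b (l.foldr max 1) with h | h
    · right; rw [h]; simp
    · rw [h]
      rcases ih with h | h
      · exact Or.inl h
      · exact Or.inr (List.mem_cons_of_mem _ h)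

theorem one_le_SS (n : ℕ) : 1 ≤ SS n := by
  unfold SS
  generalize List.map _ _ = l
  induction l with
  | nil => simp
  | cons b l ih => simp [ih]

theorem SS_ge {n j : ℕ} (h : j < n.primeFactorsList.length) :
    (n.primeFactorsList.drop j).headI * (n.primeFactorsList.drop j).prod ≤ SS n := by
  apply foldr_max_le
  exact List.mem_map.2 ⟨j, by simpa using h, rfl⟩

theorem pfl_mul {q m : ℕ} (hq : q.Prime) (hm : m ≠ 0) (h : ∀ r : ℕ, r.Prime → r ∣ m → r ≤ q) :
    (q * m).primeFactorsList = m.primeFactorsList ++ [q] := by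
  have hp : List.Perm (q * m).primeFactorsList (m.primeFactorsList ++ [q]) := by
    refine (Nat.perm_primeFactorsList_mul hq.ne_zero hm).trans ?_
    rw [Nat.primeFactorsList_prime hq]
    exact List.perm_append_comm
  refine hp.eq_of_pairwise (le := (· ≤ ·)) (fun a b _ _ => le_antisymm) ?_ ?_
  · exact (Nat.primeFactorsList_sorted _).pairwise
  · rw [List.pairwise_append]
    refine ⟨(Nat.primeFactorsList_sorted _).pairwise, by simp, ?_⟩
    intro a ha b hb
    simp at hb
    subst hb
    exact h a (Nat.prime_of_mem_primeFactorsList ha) (Nat.dvd_of_mem_primeFactorsList ha)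

theorem SS_mul {q m : ℕ} (hq : q.Prime) (hm : m ≠ 0) (h : ∀ r : ℕ, r.Prime → r ∣ m → r ≤ q) :
    q * q ≤ SS (q * m) ∧ q * SS m ≤ SS (q * m) := by
  have hl := pfl_mul hq hm h
  have hqq : q * q ≤ SS (q * m) := by
    have := SS_ge (n := q * m) (j := m.primeFactorsList.length) (by rw [hl]; simp)
    rw [hl] at this
    simpa using this
  refine ⟨hqq, ?_⟩
  rcases foldr_max_mem ((List.range m.primeFactorsList.length).map
    (fun j => (m.primeFactorsList.drop j).headI * (m.primeFactorsList.drop j).prod)) with h1 | h1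
  · have h1 : SS m = 1 := h1
    rw [h1]
    have := hq.pos
    nlinarith
  · obtain ⟨j, hj, hjeq⟩ := List.mem_map.1 h1
    have hjeq : _ = SS m := hjeq
    simp only [List.mem_range] at hj
    have := SS_ge (n := q * m) (j := j) (by rw [hl]; simp; omega)
    rw [hl, List.drop_append_of_le_length hj.le] at this
    rw [← hjeq]
    have hne : m.primeFactorsList.drop j ≠ [] := by
      simp; omega
    obtain ⟨a, t, hat⟩ := List.exists_cons_of_ne_nil hne
    rw [hat] at this ⊢
    simp at this ⊢
    calc _ = _ := by ring
      _ ≤ _ := this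

theorem good_of_SS (n : ℕ) : ∀ z p, n ≠ 0 → (∀ r : ℕ, r.Prime → r ∣ n → r ≤ p) → SS n ≤ z →
    Good z p n := by
  induction n using Nat.strong_induction_on with
  | _ n ih =>
    intro z p hn hp hS
    by_cases h1 : n = 1
    · subst h1; exact Good.one _ _
    · have hne : n.primeFactors.Nonempty := Nat.nonempty_primeFactors.2 (by omega)
      have hmem := Finset.max'_mem _ hne
      have hmax : ∀ r ∈ n.primeFactors, r ≤ n.primeFactors.max' hne :=
        fun r hr => Finset.le_max' _ r hr
      generalize n.primeFactors.max' hne = q at hmem hmax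
      have hq := Nat.prime_of_mem_primeFactors hmem
      obtain ⟨m, rfl⟩ := Nat.dvd_of_mem_primeFactors hmem
      have hm : m ≠ 0 := by rintro rfl; simp at hn
      have hsm : ∀ r : ℕ, r.Prime → r ∣ m → r ≤ q := fun r hr hd =>
        hmax r (Nat.mem_primeFactors.2 ⟨hr, Dvd.dvd.mul_left hd q, hn⟩)
      obtain ⟨ha, hb⟩ := SS_mul hq hm hsm
      refine Good.mul z p q m hq (hp q hq (Dvd.intro m rfl)) (ha.trans hS) ?_
      refine ih m ?_ _ _ hm hsm ?_
      · have := hq.two_le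
        have : 0 < m := Nat.pos_of_ne_zero hm
        nlinarith
      · rw [Nat.le_div_iff_mul_le hq.pos, mul_comm]
        exact hb.trans hS

theorem exists_list (z p : ℕ) (hp : 2 ≤ p) : ∃ l : List ℕ, l.Nodup ∧ l.IsChain DAdj ∧
    (∀ n ∈ l, n = 1 ∨ n ∈ Sm z p) ∧ ∀ n, Good z p n → n ∈ l := by
  by_cases hz : 2 ≤ z
  · obtain ⟨l, h1, h2, -, -, h3, h4⟩ := T_all z (fun w _ => HI_all w) hz p hp
    exact ⟨l, h1, h2, fun n hn => Or.inr (h3 n hn), h4⟩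
  · refine ⟨[1], by simp, by simp, by simp, ?_⟩
    intro n hn
    cases hn with
    | one => simp
    | mul _ _ q m hq hqp hqz hm =>
      have := hq.two_le
      nlinarith

/-- For all real numbers `x ≥ 1` and `y ≥ 2`, one has `f(x,y) ≥ A(x/2, y)`. -/
theorem stmt_0 (x y : ℝ) (hx : 1 ≤ x) (hy : 2 ≤ y) :
    Axy (x / 2) y ≤ fxy x y := by
  classical
  have hp : 2 ≤ ⌊y⌋₊ := Nat.le_floor (by exact_mod_cast hy)
  obtain ⟨l, h1, h2, h3, h4⟩ := exists_list ⌊x / 2⌋₊ ⌊y⌋₊ hp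
  have hA : Axy (x / 2) y ≤ l.length := by
    unfold Axy
    rw [← List.toFinset_card_of_nodup h1, ← Set.ncard_coe_finset]
    apply Set.ncard_le_ncard _ (Finset.finite_toSet _)
    rintro n ⟨hn1, hnP, hnS⟩
    simp only [List.coe_toFinset, Set.mem_ofPred_eq]
    apply h4
    apply good_of_SS n _ _ (by omega)
    · intro r hr hd
      apply Nat.le_floor
      refine le_trans ?_ hnP
      have hr2 := hr.two_le
      have hrn := Nat.le_of_dvd (by omega) hd
      rw [Pmax, if_neg (by omega)]
      exact_mod_cast Finset.le_sup (f := id) (Nat.mem_primeFactors.2 ⟨hr, hd, by omega⟩)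
    · exact Nat.le_floor hnS
  refine hA.trans ?_
  unfold fxy
  apply le_csSup
  · refine ⟨⌊x⌋₊ + 1, ?_⟩
    rintro L ⟨l', ⟨hnd, -, -⟩, hb, rfl⟩
    rw [← List.toFinset_card_of_nodup hnd, ← Finset.card_range (⌊x⌋₊ + 1)]
    apply Finset.card_le_card
    intro n hn
    have := Nat.le_floor (hb n (List.mem_toFinset.1 hn)).1
    simp only [Finset.mem_range]
    omega
  · refine ⟨l, ⟨h1, ?_, h2⟩, ?_, rfl⟩
    · intro n hn
      rcases h3 n hn with rfl | h
      · norm_num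
      · exact h.1
    · intro n hn
      rcases h3 n hn with rfl | h
      · refine ⟨by simpa using hx, ?_⟩
        simp [Pmax]; linarith
      · obtain ⟨h0, hz, hs⟩ := h
        constructor
        · have hf : (⌊x / 2⌋₊ : ℝ) ≤ x / 2 := Nat.floor_le (by linarith)
          have hz' : (n : ℝ) ≤ 2 * (⌊x / 2⌋₊ : ℝ) := by exact_mod_cast hz
          linarith
        · have hfy : (⌊y⌋₊ : ℝ) ≤ y := Nat.floor_le (by linarith)
          refine le_trans ?_ hfy
          have : Pmax n ≤ ⌊y⌋₊ := by
            unfold Pmax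
            split_ifs with h
            · omega
            · apply Finset.sup_le
              intro r hr
              exact hs r (Nat.prime_of_mem_primeFactors hr) (Nat.dvd_of_mem_primeFactors hr)
          exact_mod_cast this
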